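/- Let n > 1 be a positive integer and let p be the smallest prime divisor of n. Then n is nice if and only if n/p has fewer than p distinct prime factors, i.e., ω(n/p) < p. -/

import Mathlib

/-- A congruence is a pair `(a, d)` representing `a (mod d)`, with residue `a : ℤ`
and modulus `d : ℕ`. Two congruences overlap if some integer satisfies both. -/
def Overlap (c₁ c₂ : ℤ × ℕ) : Prop :=
  ∃ x : ℤ, x ≡ c₁.1 [ZMOD (c₁.2 : ℤ)] ∧ x ≡ c₂.1 [ZMOD (c₂.2 : ℤ)]

/-- A set of congruences is good if any two distinct overlapping congruences in it
have coprime moduli. -/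
def IsGood (A : Set (ℤ × ℕ)) : Prop :=
  ∀ c₁ ∈ A, ∀ c₂ ∈ A, c₁ ≠ c₂ → Overlap c₁ c₂ → Nat.Coprime c₁.2 c₂.2

/-- A positive integer `n` is nice if there is a choice of residues `a d` for each
divisor `d > 1` of `n` such that `{a_d (mod d) : d ∣ n, d > 1}` is good. -/
def IsNice (n : ℕ) : Prop :=
  ∃ a : ℕ → ℤ, IsGood {c : ℤ × ℕ | ∃ d : ℕ, d ∣ n ∧ 1 < d ∧ c = (a d, d)}

/-- cyclic successor of `q` in `S` -/
noncomputable def nxt (S : Finset ℕ) (q : ℕ) : ℕ :=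
  if ∃ y ∈ S, q < y then sInf {y | y ∈ S ∧ q < y} else sInf {y | y ∈ S}

lemma nxt_mem {S : Finset ℕ} {q : ℕ} (hq : q ∈ S) : nxt S q ∈ S := by
  unfold nxt
  split_ifs with h
  · obtain ⟨y, hy⟩ := h
    exact (Nat.sInf_mem (s := {y | y ∈ S ∧ q < y}) ⟨y, hy⟩).1
  · exact Nat.sInf_mem (s := {y | y ∈ S}) ⟨q, hq⟩

lemma nxt_gt {S : Finset ℕ} {q x : ℕ} (hx : x ∈ S) (hqx : q < x) :
    q < nxt S q ∧ nxt S q ≤ x := by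
  unfold nxt
  rw [if_pos ⟨x, hx, hqx⟩]
  exact ⟨(Nat.sInf_mem (s := {y | y ∈ S ∧ q < y}) ⟨x, hx, hqx⟩).2, Nat.sInf_le ⟨hx, hqx⟩⟩

lemma nxt_or {S : Finset ℕ} {q x : ℕ} (hx : x ∈ S) :
    q < nxt S q ∨ nxt S q ≤ x := by
  by_cases h : ∃ y ∈ S, q < y
  · obtain ⟨y, hy, hqy⟩ := h
    exact Or.inl (nxt_gt hy hqy).1
  · right
    unfold nxt
    rw [if_neg h]
    exact Nat.sInf_le hx

lemma sub_of_nxt {S T : Finset ℕ} {q₀ : ℕ} (h0 : q₀ ∈ S ∩ T)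
    (h : ∀ q ∈ S ∩ T, nxt S q = nxt T q) : S ⊆ T := by
  intro x hxS
  by_contra hxT
  have hcl : ∀ q ∈ S ∩ T, nxt S q ∈ S ∩ T := by
    intro q hq
    have h1 := nxt_mem (Finset.mem_inter.1 hq).1
    have h2 := nxt_mem (Finset.mem_inter.1 hq).2
    rw [← h q hq] at h2
    exact Finset.mem_inter.2 ⟨h1, h2⟩
  by_cases hlt : ((S ∩ T).filter (· < x)).Nonempty
  · obtain ⟨y, hy, hmax⟩ := Finset.exists_max_image _ id hlt
    rw [Finset.mem_filter] at hy
    have h1 := nxt_gt hxS hy.2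
    have h2 := hcl y hy.1
    have hne : nxt S y ≠ x := by
      intro he
      rw [he] at h2
      exact hxT (Finset.mem_inter.1 h2).2
    have h3 := hmax (nxt S y) (Finset.mem_filter.2 ⟨h2, lt_of_le_of_ne h1.2 hne⟩)
    simp only [id] at h3
    omega
  · obtain ⟨y, hy, hmax⟩ := Finset.exists_max_image (S ∩ T) id ⟨q₀, h0⟩
    have h2 := hcl y hy
    have h3 := hmax _ h2
    simp only [id] at h3
    have hne : nxt S y ≠ x := by
      intro he
      rw [he] at h2
      exact hxT (Finset.mem_inter.1 h2).2
    rcases nxt_or (q := y) hxS with h4 | h4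
    · omega
    · exact hlt ⟨nxt S y, Finset.mem_filter.2 ⟨h2, lt_of_le_of_ne h4 hne⟩⟩

lemma eq_of_nxt {S T : Finset ℕ} {q₀ : ℕ} (h0 : q₀ ∈ S ∩ T)
    (h : ∀ q ∈ S ∩ T, nxt S q = nxt T q) : S = T := by
  apply Finset.Subset.antisymm (sub_of_nxt h0 h)
  rw [Finset.inter_comm] at h0 h
  exact sub_of_nxt h0 (fun q hq => (h q hq).symm)

/-- rank of `r` among the elements of `P` -/
def idx (P : Finset ℕ) (r : ℕ) : ℕ := (P.filter (· ≤ r)).card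

lemma idx_pos {P : Finset ℕ} {r : ℕ} (hr : r ∈ P) : 1 ≤ idx P r :=
  Finset.card_pos.2 ⟨r, by simp [hr]⟩

lemma idx_le (P : Finset ℕ) (r : ℕ) : idx P r ≤ P.card := Finset.card_filter_le _ _

lemma idx_lt {P : Finset ℕ} {r s : ℕ} (hs : s ∈ P) (h : r < s) : idx P r < idx P s := by
  apply Finset.card_lt_card
  rw [Finset.ssubset_iff_of_subset]
  · exact ⟨s, by simp [hs], by simp [h]⟩
  · intro y
    simp only [Finset.mem_filter]
    rintro ⟨h1, h2⟩
    exact ⟨h1, by omega⟩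

lemma idx_inj {P : Finset ℕ} {r s : ℕ} (hr : r ∈ P) (hs : s ∈ P) (h : idx P r = idx P s) :
    r = s := by
  rcases lt_trichotomy r s with h1 | h1 | h1
  · have := idx_lt hs h1
    omega
  · exact h1
  · have := idx_lt hr h1
    omega

lemma no_lt {q v w i j k : ℕ} {x : ℤ} (hq : 0 < q) (hv : 1 ≤ v) (hvw : v < w)
    (hi : 1 ≤ i) (hik : i ≤ k) (hk : k < q)
    (h1 : x ≡ ((q ^ (v - 1) * i : ℕ) : ℤ) [ZMOD ((q ^ v : ℕ) : ℤ)])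
    (h2 : x ≡ ((q ^ (w - 1) * j : ℕ) : ℤ) [ZMOD ((q ^ w : ℕ) : ℤ)]) : False := by
  have h3 := h2.of_dvd (Int.natCast_dvd_natCast.2 (pow_dvd_pow q hvw.le))
  have h4 := h1.symm.trans h3
  rw [Int.natCast_modEq_iff] at h4
  have h5 : q ^ v ∣ q ^ (w - 1) * j := (pow_dvd_pow q (by omega)).mul_right _
  have h6 := (h4.dvd_iff dvd_rfl).2 h5
  obtain ⟨u, rfl⟩ : ∃ u, v = u + 1 := ⟨v - 1, by omega⟩
  rw [Nat.add_sub_cancel, pow_succ] at h6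
  have h7 := Nat.dvd_of_mul_dvd_mul_left (pow_pos hq u) h6
  have := Nat.le_of_dvd hi h7
  omega

lemma eq_idx {q v i j k : ℕ} {x : ℤ} (hq : 0 < q) (hv : 1 ≤ v)
    (hi : 1 ≤ i) (hik : i ≤ k) (hj : 1 ≤ j) (hjk : j ≤ k) (hk : k ≤ q)
    (h1 : x ≡ ((q ^ (v - 1) * i : ℕ) : ℤ) [ZMOD ((q ^ v : ℕ) : ℤ)])
    (h2 : x ≡ ((q ^ (v - 1) * j : ℕ) : ℤ) [ZMOD ((q ^ v : ℕ) : ℤ)]) : i = j := by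
  have h4 := h1.symm.trans h2
  rw [Int.natCast_modEq_iff] at h4
  obtain ⟨u, rfl⟩ : ∃ u, v = u + 1 := ⟨v - 1, by omega⟩
  rw [Nat.add_sub_cancel, pow_succ] at h4
  have h5 : i ≡ j [MOD q] := Nat.ModEq.mul_left_cancel' (pow_pos hq u).ne' h4
  have h6 : (q : ℤ) ∣ j - i := (Nat.modEq_iff_dvd).1 h5
  have h7 := Int.eq_zero_of_abs_lt_dvd h6 (by rw [abs_lt]; constructor <;> omega)
  omega

lemma residue_exists (P : Finset ℕ) (d : ℕ) : ∃ a : ℤ, ∀ q ∈ d.primeFactors,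
    a ≡ ((q ^ (d.factorization q - 1) * idx P (nxt d.primeFactors q) : ℕ) : ℤ)
      [ZMOD ((q ^ d.factorization q : ℕ) : ℤ)] := by
  obtain ⟨k, hk⟩ := Nat.chineseRemainderOfFinset
    (fun q => q ^ (d.factorization q - 1) * idx P (nxt d.primeFactors q))
    (fun q => q ^ d.factorization q) d.primeFactors
    (fun q hq => pow_ne_zero _ (Nat.prime_of_mem_primeFactors hq).ne_zero)
    (fun q hq r hr hqr => Nat.Coprime.pow _ _
      ((Nat.coprime_primes (Nat.prime_of_mem_primeFactors hq)
        (Nat.prime_of_mem_primeFactors hr)).2 hqr))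
  exact ⟨k, fun q hq => Int.natCast_modEq_iff.2 (hk q hq)⟩

lemma nice_of_lt (n : ℕ) (hn : 1 < n)
    (h : (n / n.minFac).primeFactors.card < n.minFac) : IsNice n := by
  have hp : n.minFac.Prime := Nat.minFac_prime (by omega)
  have hmul : n.minFac * (n / n.minFac) = n := Nat.mul_div_cancel' n.minFac_dvd
  have hm0 : n / n.minFac ≠ 0 := by
    intro h0
    rw [h0] at hmul
    omega
  have hpf : n.primeFactors = insert n.minFac (n / n.minFac).primeFactors := by
    conv_lhs => rw [← hmul]
    rw [Nat.primeFactors_mul hp.ne_zero hm0, hp.primeFactors]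
    rfl
  have hk : n.primeFactors.card ≤ n.minFac := by
    rw [hpf]
    have := Finset.card_insert_le n.minFac (n / n.minFac).primeFactors
    omega
  have hkq : ∀ q, q.Prime → q ∣ n → n.primeFactors.card ≤ q :=
    fun q hq hqn => hk.trans (Nat.minFac_le_of_dvd hq.two_le hqn)
  have hkq2 : ∀ q, q.Prime → q ^ 2 ∣ n → n.primeFactors.card < q := by
    intro q hq hqn
    have hqn1 : q ∣ n := (dvd_pow_self q two_ne_zero).trans hqn
    have hle := Nat.minFac_le_of_dvd hq.two_le hqn1
    rcases hle.lt_or_eq with h1 | h1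
    · omega
    · rw [← h1, pow_two] at hqn
      have h2 : n.minFac ∣ n / n.minFac := Nat.dvd_div_of_mul_dvd hqn
      rw [hpf, Finset.insert_eq_of_mem (Nat.mem_primeFactors.2 ⟨hp, h2, hm0⟩), ← h1]
      exact h
  choose a ha using residue_exists n.primeFactors
  refine ⟨a, ?_⟩
  rintro _ ⟨d, hd, hd1, rfl⟩ _ ⟨e, he, he1, rfl⟩ hne ⟨x, hxd, hxe⟩
  simp only at hxd hxe ⊢
  by_contra hco
  apply hne
  have hd0 : d ≠ 0 := by omega
  have he0 : e ≠ 0 := by omega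
  have hn0 : n ≠ 0 := by omega
  obtain ⟨q₀, hq₀, hq₀d, hq₀e⟩ := Nat.Prime.not_coprime_iff_dvd.1 hco
  have h0 : q₀ ∈ d.primeFactors ∩ e.primeFactors := by
    simp [hq₀, hq₀d, hq₀e, hd0, he0]
  have key : ∀ q ∈ d.primeFactors ∩ e.primeFactors,
      d.factorization q = e.factorization q ∧
      nxt d.primeFactors q = nxt e.primeFactors q := by
    intro q hq
    obtain ⟨hqd, hqe⟩ := Finset.mem_inter.1 hq
    have hqp := Nat.prime_of_mem_primeFactors hqd
    have hvd : 1 ≤ d.factorization q :=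
      (hqp.dvd_iff_one_le_factorization hd0).1 (Nat.dvd_of_mem_primeFactors hqd)
    have hve : 1 ≤ e.factorization q :=
      (hqp.dvd_iff_one_le_factorization he0).1 (Nat.dvd_of_mem_primeFactors hqe)
    have hXd := (hxd.of_dvd (Int.natCast_dvd_natCast.2 (Nat.ordProj_dvd d q))).trans (ha d q hqd)
    have hXe := (hxe.of_dvd (Int.natCast_dvd_natCast.2 (Nat.ordProj_dvd e q))).trans (ha e q hqe)
    have hnd : nxt d.primeFactors q ∈ n.primeFactors :=
      Nat.primeFactors_mono hd hn0 (nxt_mem hqd)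
    have hnE : nxt e.primeFactors q ∈ n.primeFactors :=
      Nat.primeFactors_mono he hn0 (nxt_mem hqe)
    have hv : d.factorization q = e.factorization q := by
      rcases lt_trichotomy (d.factorization q) (e.factorization q) with h1 | h1 | h1
      · exact (no_lt hqp.pos hvd h1 (idx_pos hnd) (idx_le _ _)
          (hkq2 q hqp (((pow_dvd_pow q (by omega)).trans (Nat.ordProj_dvd e q)).trans he))
          hXd hXe).elim
      · exact h1
      · exact (no_lt hqp.pos hve h1 (idx_pos hnE) (idx_le _ _)
          (hkq2 q hqp (((pow_dvd_pow q (by omega)).trans (Nat.ordProj_dvd d q)).trans hd))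
          hXe hXd).elim
    refine ⟨hv, idx_inj hnd hnE ?_⟩
    rw [← hv] at hXe
    exact eq_idx hqp.pos hvd (idx_pos hnd) (idx_le _ _) (idx_pos hnE) (idx_le _ _)
      (hkq q hqp ((Nat.dvd_of_mem_primeFactors hqd).trans hd)) hXd hXe
  have hS := eq_of_nxt h0 (fun q hq => (key q hq).2)
  have hde : d = e := by
    apply Nat.eq_of_factorization_eq hd0 he0
    intro q
    by_cases hq : q ∈ d.primeFactors
    · exact (key q (Finset.mem_inter.2 ⟨hq, hS ▸ hq⟩)).1
    · have hq' : q ∉ e.primeFactors := hS ▸ hq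
      rw [← Nat.support_factorization, Finsupp.notMem_support_iff] at hq hq'
      rw [hq, hq']
  rw [hde]

lemma sep_of_good {n : ℕ} {a : ℕ → ℤ}
    (hg : IsGood {c : ℤ × ℕ | ∃ d : ℕ, d ∣ n ∧ 1 < d ∧ c = (a d, d)})
    {d e : ℕ} (hd : d ∣ n) (hd1 : 1 < d) (he : e ∣ n) (he1 : 1 < e) (hne : d ≠ e)
    (hco : ¬ Nat.Coprime d e) : ¬ a d ≡ a e [ZMOD ((Nat.gcd d e : ℕ) : ℤ)] := by
  intro h
  apply hco
  refine hg (a d, d) ⟨d, hd, hd1, rfl⟩ (a e, e) ⟨e, he, he1, rfl⟩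
    (fun h => hne (Prod.ext_iff.1 h).2) ?_
  have h1 : ((Nat.gcd d e : ℕ) : ℤ) ∣ a e - a d := h.dvd
  obtain ⟨t, ht⟩ := h1
  rw [Nat.gcd_eq_gcd_ab] at ht
  refine ⟨a d + d * (Nat.gcdA d e * t), ?_, ?_⟩
  · exact (Int.modEq_iff_dvd.2 ⟨-(Nat.gcdA d e * t), by simp⟩)
  · refine (Int.modEq_iff_dvd.2 ⟨Nat.gcdB d e * t, ?_⟩)
    simp only
    linear_combination ht

lemma lt_of_nice (n : ℕ) (hn : 1 < n) (h : IsNice n) :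
    (n / n.minFac).primeFactors.card < n.minFac := by
  obtain ⟨a, hg⟩ := h
  have hp : n.minFac.Prime := Nat.minFac_prime (by omega)
  have hmul : n.minFac * (n / n.minFac) = n := Nat.mul_div_cancel' n.minFac_dvd
  by_contra hlt
  set p := n.minFac with hpdef
  set Q := insert 1 (n / p).primeFactors with hQ
  have h1 : 1 ∉ (n / p).primeFactors := fun h => Nat.not_prime_one (Nat.prime_of_mem_primeFactors h)
  have hQc : p < Q.card := by
    rw [hQ, Finset.card_insert_of_notMem h1]
    omega
  have hQd : ∀ q ∈ Q, p * q ∣ n ∧ 0 < q := by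
    intro q hq
    rw [hQ, Finset.mem_insert] at hq
    rcases hq with rfl | hq
    · simp only [mul_one]
      exact ⟨n.minFac_dvd, one_pos⟩
    · refine ⟨?_, (Nat.prime_of_mem_primeFactors hq).pos⟩
      conv_rhs => rw [← hmul]
      exact mul_dvd_mul_left p (Nat.dvd_of_mem_primeFactors hq)
  have hQco : ∀ q ∈ Q, ∀ r ∈ Q, q ≠ r → Nat.Coprime q r := by
    intro q hq r hr hqr
    rw [hQ, Finset.mem_insert] at hq hr
    rcases hq with rfl | hq
    · simp
    rcases hr with rfl | hr
    · simp
    exact (Nat.coprime_primes (Nat.prime_of_mem_primeFactors hq)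
        (Nat.prime_of_mem_primeFactors hr)).2 hqr
  haveI : NeZero p := ⟨hp.ne_zero⟩
  obtain ⟨q, hq, r, hr, hqr, he⟩ := Finset.exists_ne_map_eq_of_card_lt_of_maps_to
    (s := Q) (t := (Finset.univ : Finset (ZMod p)))
    (by rw [Finset.card_univ, ZMod.card]; exact hQc)
    (f := fun q => ((a (p * q) : ℤ) : ZMod p)) (fun _ _ => Finset.mem_coe.2 (Finset.mem_univ _))
  have hgcd : Nat.gcd (p * q) (p * r) = p := by
    rw [Nat.gcd_mul_left, hQco q hq r hr hqr, mul_one]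
  have hgt : ∀ q ∈ Q, 1 < p * q := fun q hq =>
    lt_of_lt_of_le hp.one_lt (Nat.le_mul_of_pos_right p (hQd q hq).2)
  apply sep_of_good hg (hQd q hq).1 (hgt q hq) (hQd r hr).1 (hgt r hr)
    (fun h => hqr (Nat.eq_of_mul_eq_mul_left hp.pos h))
  · rw [Nat.Coprime, hgcd]
    exact hp.one_lt.ne'
  · rw [hgcd]
    exact (ZMod.intCast_eq_intCast_iff _ _ _).1 he

theorem nice_iff (n : ℕ) (hn : 1 < n) :
    IsNice n ↔ (n / n.minFac).primeFactors.card < n.minFac :=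
  ⟨lt_of_nice n hn, nice_of_lt n hn⟩
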